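/- There exists a universal constant C > 0 such that for all positive integers n, T and every matrix A ∈ [−1,1]^{n×T}, there exists a subset S of the column indices {1,…,T} with |S| ≤ T/2 such that for every row index i ∈ {1,…,n}: |Σ_{j∈S} a_{ij} − (1/2)·Σ_{j=1}^{T} a_{ij}| ≤ C·√(T·log(2 + n/T)). -/

import Mathlib

open Finset
open scoped Classical

open Real
open scoped BigOperators

/-!
Choosing half of the columns up to an error amounts to colouring the columns with signs so that all
signed row sums are small. Round the signed row sums of a colouring to multiples of
`Δ ≍ √(t log (8 + n / t))`, where `n` and `t` count the rows and columns. For a random colouring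
they are sub-Gaussian, so each of them rounds to `0` with high probability and the rounded vector
has average code length at most `t / 8`; hence at least `2 ^ t * exp (-t / 8)` colourings share
one rounded vector. Too many to fit in a Hamming ball of radius `t / 8`, they include `χ` and `χ'`
differing on more than `t / 8` columns, and `(χ - χ') / 2` is a partial colouring with row sums of
order `Δ`. Iterate on the columns it leaves uncoloured: `Δ` shrinks geometrically, so the total
stays of order `Δ`. The smaller colour class is the required set of columns.
-/

section RademacherSums

variable {ι : Type*} [Fintype ι]

/-- The signed sum `∑ ± a j`; its absolute value is the discrepancy of the row `a` under the
colouring `χ` of the columns by the signs `ℤˣ = {1, -1}`. -/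
def signedSum (a : ι → ℝ) (χ : ι → ℤˣ) : ℝ := ∑ j, χ j • a j

lemma expect_exp_mul_signedSum (a : ι → ℝ) (θ : ℝ) :
    𝔼 χ, exp (θ * signedSum a χ) = ∏ j, cosh (θ * a j) := by
  have hsum : ∑ χ, exp (θ * signedSum a χ) = ∏ j, ∑ ε : ℤˣ, exp (θ * ε • a j) := by
    simp only [prod_univ_sum, Fintype.piFinset_univ, signedSum, mul_sum, exp_sum]
  have hcosh (j : ι) : ∑ ε : ℤˣ, exp (θ * ε • a j) = 2 * cosh (θ * a j) := by
    simp [UnitsInt.univ, Units.smul_def, cosh_eq, mul_div_cancel₀]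
  simp only [Fintype.expect_eq_sum_div_card, hsum, hcosh, prod_mul_distrib]
  simp

lemma expect_exp_mul_signedSum_le (a : ι → ℝ) (θ : ℝ) :
    𝔼 χ, exp (θ * signedSum a χ) ≤ exp (θ ^ 2 * (∑ j, a j ^ 2) / 2) := by
  rw [expect_exp_mul_signedSum]
  calc ∏ j, cosh (θ * a j) ≤ ∏ j, exp ((θ * a j) ^ 2 / 2) :=
        prod_le_prod (fun j _ => (cosh_pos _).le) fun j _ => cosh_le_exp_half_sq _
    _ = exp (θ ^ 2 * (∑ j, a j ^ 2) / 2) := by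
        simp only [← exp_sum, mul_pow, mul_sum, sum_div]

lemma expect_exp_mul_abs_signedSum_le (a : ι → ℝ) (θ : ℝ) :
    𝔼 χ, exp (θ * |signedSum a χ|) ≤ 2 * exp (θ ^ 2 * (∑ j, a j ^ 2) / 2) := by
  have habs (s : ℝ) : exp (θ * |s|) ≤ exp (θ * s) + exp (-θ * s) := by
    rcases abs_choice s with hs | hs <;> rw [hs]
    · exact le_add_of_nonneg_right (exp_pos _).le
    · rw [mul_neg, ← neg_mul]
      exact le_add_of_nonneg_left (exp_pos _).le
  calc 𝔼 χ, exp (θ * |signedSum a χ|)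
      ≤ 𝔼 χ, exp (θ * signedSum a χ) + 𝔼 χ, exp (-θ * signedSum a χ) := by
        rw [← expect_add_distrib]
        exact expect_le_expect fun χ _ => habs _
    _ ≤ 2 * exp (θ ^ 2 * (∑ j, a j ^ 2) / 2) := by
        have hneg := expect_exp_mul_signedSum_le a (-θ)
        rw [neg_sq] at hneg
        linarith [expect_exp_mul_signedSum_le a θ]

end RademacherSums

section Rounding

lemma abs_round_sub_half_le_abs (x : ℝ) : |(round x : ℝ)| - 1 / 2 ≤ |x| := by
  have := abs_sub_abs_le_abs_sub (round x : ℝ) x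
  rw [abs_sub_comm] at this
  linarith [abs_sub_round x]

lemma abs_round_le_exp {c : ℝ} (hc : 1 ≤ c) (x : ℝ) :
    |(round x : ℝ)| ≤ exp (c * (|x| - 1 / 2)) := by
  rcases eq_or_ne (round x) 0 with h0 | h0
  · simp [h0, exp_nonneg]
  have hk : (1 : ℝ) ≤ |(round x : ℝ)| := by exact_mod_cast Int.one_le_abs h0
  have hx := abs_round_sub_half_le_abs x
  calc |(round x : ℝ)| ≤ exp (|(round x : ℝ)| - 1) := by
        simpa using add_one_le_exp (|(round x : ℝ)| - 1)
    _ ≤ exp (c * (|x| - 1 / 2)) := exp_le_exp.2 (by nlinarith)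

lemma abs_sub_le_of_round_div_eq {x y Δ : ℝ} (hΔ : 0 < Δ) (h : round (x / Δ) = round (y / Δ)) :
    |x - y| ≤ Δ := by
  have hx := abs_sub_round (x / Δ)
  have hy := abs_sub_round (y / Δ)
  rw [← h, abs_sub_comm] at hy
  have hxy : |(x - y) / Δ| ≤ 1 := by
    rw [sub_div]
    linarith [abs_sub_le (x / Δ) (round (x / Δ)) (y / Δ)]
  rwa [abs_div, abs_of_pos hΔ, div_le_one hΔ] at hxy

lemma expect_abs_round_signedSum_div_le {ι : Type*} [Fintype ι] {a : ι → ℝ} {t Δ : ℝ}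
    (ht : 0 < t) (ha : ∑ j, a j ^ 2 ≤ t) (hΔ : 0 < Δ) (htΔ : 2 * t ≤ Δ ^ 2) :
    𝔼 χ, |(round (signedSum a χ / Δ) : ℝ)| ≤ 2 * exp (-(Δ ^ 2 / (8 * t))) := by
  -- The tilt `c` minimises the exponent `-c / 2 + (c / Δ) ^ 2 * t / 2` below.
  set c := Δ ^ 2 / (2 * t) with hc
  have hc1 : 1 ≤ c := (one_le_div (by positivity)).2 htΔ
  calc 𝔼 χ, |(round (signedSum a χ / Δ) : ℝ)|
      ≤ 𝔼 χ, exp (-(c / 2)) * exp (c / Δ * |signedSum a χ|) := by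
        refine expect_le_expect fun χ _ => (abs_round_le_exp hc1 _).trans_eq ?_
        rw [← exp_add, abs_div, abs_of_pos hΔ]
        ring_nf
    _ ≤ exp (-(c / 2)) * (2 * exp ((c / Δ) ^ 2 * t / 2)) := by
        rw [← mul_expect]
        gcongr
        refine (expect_exp_mul_abs_signedSum_le a _).trans ?_
        gcongr
    _ = 2 * exp (-(Δ ^ 2 / (8 * t))) := by
        rw [mul_left_comm, ← exp_add, hc]
        congr 2
        field_simp
        ring

end Rounding

section CodeLengths

/-- A real-valued code length: a function satisfying Kraft's inequality (with base `e`). -/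
def IsCodeLength {α : Type*} (ℓ : α → ℝ) : Prop :=
  ∀ s : Finset α, ∑ v ∈ s, exp (-ℓ v) ≤ 1

lemma IsCodeLength.pi {κ α : Type*} [Fintype κ] {ℓ : κ → α → ℝ} (hℓ : ∀ i, IsCodeLength (ℓ i)) :
    IsCodeLength fun v : κ → α => ∑ i, ℓ i (v i) := by
  intro s
  have hs : s ⊆ Fintype.piFinset fun i => s.image fun v => v i := fun v hv =>
    Fintype.mem_piFinset.2 fun i => mem_image_of_mem _ hv
  calc ∑ v ∈ s, exp (-∑ i, ℓ i (v i))
      ≤ ∑ v ∈ Fintype.piFinset fun i => s.image fun v => v i, exp (-∑ i, ℓ i (v i)) :=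
        sum_le_sum_of_subset_of_nonneg hs fun _ _ _ => (exp_pos _).le
    _ = ∏ i, ∑ k ∈ s.image fun v => v i, exp (-ℓ i k) := by
        simp only [prod_univ_sum, ← sum_neg_distrib, exp_sum]
    _ ≤ 1 := prod_le_one (fun i _ => sum_nonneg fun k _ => (exp_pos _).le)
        fun i _ => hℓ i _

lemma exp_expect_le_expect_exp {Ω : Type*} [Fintype Ω] [Nonempty Ω] (f : Ω → ℝ) :
    exp (𝔼 ω, f ω) ≤ 𝔼 ω, exp (f ω) := by
  have h := convexOn_exp.map_sum_le (t := univ) (w := fun _ : Ω => (Fintype.card Ω : ℝ)⁻¹) (p := f)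
    (fun _ _ => by positivity) (by simp) (fun _ _ => Set.mem_univ _)
  simpa only [Fintype.expect_eq_sum_div_card, smul_eq_mul, inv_mul_eq_div, ← sum_div] using h

lemma IsCodeLength.exists_card_mul_exp_le_card_fiber {Ω V : Type*} [Fintype Ω] [Nonempty Ω]
    [DecidableEq V] {ℓ : V → ℝ} (hℓ : IsCodeLength ℓ) {b : Ω → V} {m : ℝ}
    (hm : 𝔼 ω, ℓ (b ω) ≤ m) :
    ∃ v, Fintype.card Ω * exp (-m) ≤ #{ω | b ω = v} := by
  obtain ⟨ω₀, hω₀⟩ := Finite.exists_max fun ω => #{ω' | b ω' = b ω}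
  refine ⟨b ω₀, ?_⟩
  calc Fintype.card Ω * exp (-m)
      ≤ Fintype.card Ω * exp (𝔼 ω, -ℓ (b ω)) := by
        rw [expect_neg_distrib]
        gcongr
    _ ≤ Fintype.card Ω * 𝔼 ω, exp (-ℓ (b ω)) := by
        gcongr
        exact exp_expect_le_expect_exp _
    _ = ∑ v ∈ univ.image b, #{ω | b ω = v} * exp (-ℓ v) := by
        rw [Fintype.card_mul_expect, sum_comp (fun v => exp (-ℓ v)) b]
        simp only [nsmul_eq_mul]
    _ ≤ ∑ v ∈ univ.image b, #{ω | b ω = b ω₀} * exp (-ℓ v) := by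
        refine sum_le_sum fun v hv => ?_
        obtain ⟨ω, -, rfl⟩ := mem_image.1 hv
        exact mul_le_mul_of_nonneg_right (by exact_mod_cast hω₀ ω) (exp_pos _).le
    _ ≤ #{ω | b ω = b ω₀} := by
        rw [← mul_sum]
        exact mul_le_of_le_one_right (Nat.cast_nonneg _) (hℓ _)

/-- The code length on `ℤ` with weights `exp (-r * |k|)`, the summand `4 * exp (-r)` being a
convenient upper bound for the logarithm of their total mass. -/
noncomputable def geometricCodeLength (r : ℝ) (k : ℤ) : ℝ := 4 * exp (-r) + r * |(k : ℝ)|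

lemma hasSum_pow_natAbs {K : Type*} [NormedField K] {η : K} (hη : ‖η‖ < 1) :
    HasSum (fun k : ℤ => η ^ k.natAbs) ((1 + η) / (1 - η)) := by
  have hgeom := hasSum_geometric_of_norm_lt_one hη
  have hneg : HasSum (fun n : ℕ => η ^ (-((n : ℤ) + 1)).natAbs) ((1 - η)⁻¹ * η) := by
    refine (hgeom.mul_right η).congr_fun fun n => ?_
    rw [show (-((n : ℤ) + 1)).natAbs = n + 1 by lia, pow_succ]
  convert HasSum.of_nat_of_neg_add_one (f := fun k : ℤ => η ^ k.natAbs) (by simpa using hgeom) hneg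
    using 1
  ring

lemma isCodeLength_geometricCodeLength {r : ℝ} (hr : log 2 ≤ r) :
    IsCodeLength (geometricCodeLength r) := by
  intro s
  set η := exp (-r) with hη
  have hη0 : 0 < η := exp_pos _
  have hη2 : η ≤ 1 / 2 := by
    rw [one_div, hη, ← exp_log (two_pos : (0 : ℝ) < 2), ← exp_neg]
    exact exp_le_exp.2 (neg_le_neg hr)
  have hterm (k : ℤ) : exp (-geometricCodeLength r k) = exp (-(4 * η)) * η ^ k.natAbs := by
    rw [geometricCodeLength, neg_add, exp_add, hη, ← exp_nat_mul, Nat.cast_natAbs, Int.cast_abs]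
    ring_nf
  calc ∑ k ∈ s, exp (-geometricCodeLength r k)
      = exp (-(4 * η)) * ∑ k ∈ s, η ^ k.natAbs := by simp only [hterm, mul_sum]
    _ ≤ exp (-(4 * η)) * ((1 + η) / (1 - η)) := by
        have hnorm : ‖η‖ < 1 := by rw [norm_of_nonneg hη0.le]; linarith
        gcongr
        exact sum_le_hasSum s (fun k _ => by positivity) (hasSum_pow_natAbs hnorm)
    _ ≤ exp (-(4 * η)) * exp (4 * η) := by
        gcongr
        refine le_trans ?_ (add_one_le_exp (4 * η))
        rw [div_le_iff₀ (by linarith)]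
        nlinarith
    _ = 1 := by rw [← exp_add, neg_add_cancel, exp_zero]

end CodeLengths

section Hamming

variable {ι : Type*} [Fintype ι]

lemma sum_pow_hammingDist {R : Type*} [CommSemiring R] {β : ι → Type*} [∀ i, Fintype (β i)]
    [∀ i, DecidableEq (β i)] (u : ∀ i, β i) (x : R) :
    ∑ v, x ^ hammingDist u v = ∏ i, (1 + (Fintype.card (β i) - 1 : ℕ) * x) := by
  have hfactor (i : ι) :
      ∑ b, (if u i ≠ b then x else 1) = 1 + (Fintype.card (β i) - 1 : ℕ) * x := by
    rw [← add_sum_erase _ _ (mem_univ (u i)),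
      sum_congr rfl fun b hb => if_pos (ne_of_mem_erase hb).symm]
    simp [card_erase_of_mem]
  simp only [← hfactor, prod_univ_sum, Fintype.piFinset_univ, prod_ite, prod_const, hammingDist,
    one_pow, mul_one]

lemma card_le_of_forall_hammingDist_le {β : ι → Type*} [∀ i, Fintype (β i)]
    [∀ i, DecidableEq (β i)] {F : Finset (∀ i, β i)} {u : ∀ i, β i} {r : ℝ}
    (hF : ∀ v ∈ F, (hammingDist u v : ℝ) ≤ r) :
    (#F : ℝ) ≤ exp r * ∏ i, (1 + (Fintype.card (β i) - 1 : ℕ) * exp (-1)) := by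
  calc (#F : ℝ) = ∑ v ∈ F, 1 := by simp
    _ ≤ ∑ v ∈ F, exp r * exp (-1) ^ hammingDist u v := by
        refine sum_le_sum fun v hv => ?_
        rw [← exp_nat_mul, ← exp_add]
        exact one_le_exp (by linarith [hF v hv])
    _ ≤ ∑ v, exp r * exp (-1) ^ hammingDist u v :=
        sum_le_univ_sum_of_nonneg fun v => by positivity
    _ = exp r * ∏ i, (1 + (Fintype.card (β i) - 1 : ℕ) * exp (-1)) := by
        rw [← mul_sum, sum_pow_hammingDist]

lemma one_add_exp_neg_one_lt : 1 + exp (-1) < 2 * exp (-(1 / 4)) := by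
  have h1 : exp (-1) < 1 / 2 := by linarith [exp_neg_one_lt_d9]
  linarith [add_one_le_exp (-(1 / 4 : ℝ))]

lemma exists_card_div_eight_lt_hammingDist [Nonempty ι] {F : Finset (ι → ℤˣ)}
    (hF : 2 ^ Fintype.card ι * exp (-((Fintype.card ι : ℝ) / 8)) ≤ #F) :
    ∃ χ ∈ F, ∃ χ' ∈ F, (Fintype.card ι : ℝ) / 8 < hammingDist χ χ' := by
  by_contra! hclose
  set t := Fintype.card ι
  have hFpos : (0 : ℝ) < #F := lt_of_lt_of_le (by positivity) hF
  obtain ⟨χ, hχ⟩ : F.Nonempty := card_pos.1 (by exact_mod_cast hFpos)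
  have hlt : (#F : ℝ) < #F := calc
    (#F : ℝ) ≤ exp (t / 8) * (1 + exp (-1)) ^ t := by
      simpa [t] using card_le_of_forall_hammingDist_le (hclose χ hχ)
    _ < exp (t / 8) * (2 * exp (-(1 / 4))) ^ t := by
        have hpow := pow_lt_pow_left₀ one_add_exp_neg_one_lt (by positivity)
          (Fintype.card_ne_zero (α := ι))
        gcongr
    _ = 2 ^ t * exp (-((t : ℝ) / 8)) := by
        rw [mul_pow, ← exp_nat_mul, mul_left_comm, ← exp_add]
        ring_nf
    _ ≤ #F := hF
  exact hlt.false

end Hamming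

section Scale

/-- Spencer's discrepancy bound, up to a constant factor, for `n` rows and `t` columns. The summand
`8` keeps the logarithm above `2`, and the value at `t = 0` is `0`. -/
noncomputable def spencerBound (n t : ℝ) : ℝ := √(t * log (8 + n / t))

lemma two_le_log_eight_add {x : ℝ} (hx : 0 ≤ x) : 2 ≤ log (8 + x) := by
  rw [le_log_iff_exp_le (by linarith), show (2 : ℝ) = 1 + 1 by norm_num, exp_add]
  nlinarith [exp_one_lt_d9, exp_pos 1]

lemma spencerBound_pos {n t : ℝ} (hn : 0 ≤ n) (ht : 0 < t) : 0 < spencerBound n t := by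
  have := two_le_log_eight_add (div_nonneg hn ht.le)
  exact sqrt_pos.2 (by positivity)

lemma mul_log_eight_add_div_le {n t t' : ℝ} (hn : 0 ≤ n) (ht' : 0 < t') (htt' : t' ≤ t) :
    t' * log (8 + n / t') ≤ (t + t') / 2 * log (8 + n / t) := by
  have ht : 0 < t := ht'.trans_le htt'
  have hL := two_le_log_eight_add (div_nonneg hn ht.le)
  have hscale : 8 + n / t' ≤ (8 + n / t) * (t / t') := by
    have hone : 1 ≤ t / t' := (one_le_div ht').2 htt'
    have hsplit : n / t' = n / t * (t / t') := by field_simp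
    linarith
  calc t' * log (8 + n / t') ≤ t' * log ((8 + n / t) * (t / t')) := by gcongr
    _ = t' * (log (8 + n / t) + log (t / t')) := by
        rw [log_mul (by positivity) (by positivity)]
    _ ≤ t' * (log (8 + n / t) + (t / t' - 1)) := by
        gcongr
        exact log_le_sub_one_of_pos (by positivity)
    _ = t' * log (8 + n / t) + (t - t') := by field_simp
    _ ≤ (t + t') / 2 * log (8 + n / t) := by nlinarith

lemma spencerBound_le_mul_of_le {n t t' : ℝ} (hn : 0 ≤ n) (ht' : 0 ≤ t') (htt' : t' ≤ 7 / 8 * t) :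
    spencerBound n t' ≤ 31 / 32 * spencerBound n t := by
  rcases ht'.eq_or_lt with rfl | ht'
  · simp [spencerBound]
  have hL := two_le_log_eight_add (show 0 ≤ n / t from div_nonneg hn (by linarith))
  rw [spencerBound, spencerBound, sqrt_le_left (by positivity), mul_pow,
    sq_sqrt (mul_nonneg (by linarith) (by linarith))]
  have := mul_log_eight_add_div_le hn ht' (t := t) (by linarith)
  nlinarith [mul_nonneg (show 0 ≤ 7 / 8 * t - t' by linarith) (zero_le_two.trans hL)]

lemma spencerBound_le_two_mul_sqrt {n t : ℝ} (hn : 0 ≤ n) (ht : 0 ≤ t) :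
    spencerBound n t ≤ 2 * √(t * log (2 + n / t)) := by
  have hx : 0 ≤ n / t := by positivity
  have hlog : log (8 + n / t) ≤ 4 * log (2 + n / t) := calc
    log (8 + n / t) ≤ log ((2 + n / t) ^ 4) :=
      log_le_log (by positivity) (by nlinarith [pow_nonneg hx 2, pow_nonneg hx 3, pow_nonneg hx 4])
    _ = 4 * log (2 + n / t) := by simp
  calc √(t * log (8 + n / t)) ≤ √(2 ^ 2 * (t * log (2 + n / t))) := by
        refine sqrt_le_sqrt ?_
        nlinarith
    _ = 2 * √(t * log (2 + n / t)) := by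
        rw [sqrt_mul (by norm_num), sqrt_sq zero_le_two]

end Scale

section PartialColouring

variable {ι κ : Type*} [Fintype ι] [Fintype κ]

lemma expect_geometricCodeLength_round_le {a : ι → ℝ} {r t Δ : ℝ} (hr : 0 ≤ r) (ht : 0 < t)
    (ha : ∑ j, a j ^ 2 ≤ t) (hΔ : 0 < Δ) (htΔ : 2 * t ≤ Δ ^ 2) :
    𝔼 χ, geometricCodeLength r (round (signedSum a χ / Δ)) ≤
      4 * exp (-r) + 2 * r * exp (-(Δ ^ 2 / (8 * t))) := by
  simp only [geometricCodeLength, expect_add_distrib, Fintype.expect_const, ← mul_expect]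
  nlinarith [mul_le_mul_of_nonneg_left (expect_abs_round_signedSum_div_le ht ha hΔ htΔ) hr]

lemma mul_exp_neg_log_eight_add_le {n t : ℝ} (hn : 0 ≤ n) (ht : 0 < t) :
    n * (4 * exp (-(3 * log (8 + n / t))) + 2 * (3 * log (8 + n / t)) *
      exp (-(8 * log (8 + n / t)))) ≤ t / 8 := by
  obtain ⟨y, hy⟩ : ∃ y, y = 8 + n / t := ⟨_, rfl⟩
  have hy8 : 8 ≤ y := by linarith [div_nonneg hn ht.le]
  have hy0 : 0 < y := by linarith
  have hn_le : n ≤ t * y := by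
    rw [hy, mul_add, mul_div_cancel₀ _ ht.ne']
    linarith
  have hlog0 : 0 ≤ log y := log_nonneg (by linarith)
  have hlog : log y ≤ y := (log_le_sub_one_of_pos hy0).trans (sub_le_self y zero_le_one)
  have hexp (k : ℕ) : exp (-(k * log y)) = y⁻¹ ^ k := by
    rw [exp_neg, exp_nat_mul, exp_log hy0, inv_pow]
  have hexp3 := hexp 3
  have hexp8 := hexp 8
  norm_cast at hexp3 hexp8
  rw [← hy, hexp3, hexp8]
  calc n * (4 * y⁻¹ ^ 3 + 2 * (3 * log y) * y⁻¹ ^ 8)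
      ≤ t * y * (4 * y⁻¹ ^ 3 + 2 * (3 * y) * y⁻¹ ^ 8) := by gcongr
    _ = t * (4 * y⁻¹ ^ 2 + 6 * y⁻¹ ^ 6) := by
        field_simp
        ring
    _ ≤ t * (4 * 8⁻¹ ^ 2 + 6 * 8⁻¹ ^ 6) := by gcongr
    _ ≤ t / 8 := by linarith

-- With `y = 8 + n / t`, a row costs `O(y⁻³)` on average at the rate `3 * log y`, and there are at
-- most `t * y` rows.
lemma expect_sum_geometricCodeLength_le [Nonempty ι] {A : Matrix κ ι ℝ}
    (hA : ∀ i, ∑ j, A i j ^ 2 ≤ Fintype.card ι) :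
    𝔼 χ, ∑ i, geometricCodeLength
        (3 * log (8 + (Fintype.card κ : ℝ) / Fintype.card ι))
        (round (signedSum (A i) χ / (8 * spencerBound (Fintype.card κ) (Fintype.card ι)))) ≤
      (Fintype.card ι : ℝ) / 8 := by
  set n : ℝ := (Fintype.card κ : ℝ)
  set t : ℝ := (Fintype.card ι : ℝ)
  have hn : 0 ≤ n := Nat.cast_nonneg _
  have ht : 0 < t := Nat.cast_pos.2 Fintype.card_pos
  have hL := two_le_log_eight_add (div_nonneg hn ht.le)
  have hΔ : (8 * spencerBound n t) ^ 2 = 64 * (t * log (8 + n / t)) := by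
    rw [mul_pow, spencerBound, sq_sqrt (by positivity)]
    norm_num
  have hΔt : (8 * spencerBound n t) ^ 2 / (8 * t) = 8 * log (8 + n / t) := by
    rw [hΔ]
    field_simp
    norm_num
  rw [expect_sum_comm]
  refine (sum_le_sum fun i _ => expect_geometricCodeLength_round_le (by linarith) ht (hA i)
    (mul_pos (by norm_num) (spencerBound_pos hn ht)) (by nlinarith)).trans ?_
  rw [sum_const, card_univ, nsmul_eq_mul, hΔt]
  exact mul_exp_neg_log_eight_add_le hn ht

lemma exists_hammingDist_gt_abs_signedSum_sub_le [Nonempty ι] {A : Matrix κ ι ℝ}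
    (hA : ∀ i, ∑ j, A i j ^ 2 ≤ Fintype.card ι) :
    ∃ χ χ' : ι → ℤˣ, (Fintype.card ι : ℝ) / 8 < hammingDist χ χ' ∧
      ∀ i, |signedSum (A i) χ - signedSum (A i) χ'| ≤
        8 * spencerBound (Fintype.card κ) (Fintype.card ι) := by
  set n : ℝ := (Fintype.card κ : ℝ)
  set t : ℝ := (Fintype.card ι : ℝ)
  have hn : 0 ≤ n := Nat.cast_nonneg _
  have ht : 0 < t := Nat.cast_pos.2 Fintype.card_pos
  have hr : log 2 ≤ 3 * log (8 + n / t) := by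
    linarith [two_le_log_eight_add (div_nonneg hn ht.le), log_two_lt_d9]
  obtain ⟨v, hv⟩ := (IsCodeLength.pi fun _ : κ => isCodeLength_geometricCodeLength hr)
    |>.exists_card_mul_exp_le_card_fiber
      (b := fun (χ : ι → ℤˣ) i => round (signedSum (A i) χ / (8 * spencerBound n t)))
      (expect_sum_geometricCodeLength_le hA)
  rw [Fintype.card_fun, Fintype.card_units_int, Nat.cast_pow, Nat.cast_ofNat] at hv
  obtain ⟨χ, hχ, χ', hχ', hdist⟩ := exists_card_div_eight_lt_hammingDist hv
  refine ⟨χ, χ', hdist, fun i => ?_⟩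
  exact abs_sub_le_of_round_div_eq (mul_pos (by norm_num) (spencerBound_pos hn ht))
    (congrFun ((mem_filter.1 hχ).2.trans (mem_filter.1 hχ').2.symm) i)

end PartialColouring

section Colouring

variable {ι κ : Type*} [Fintype ι] [Fintype κ]

-- `(χ - χ') / 2` is a partial colouring, vanishing exactly where `χ` and `χ'` agree.
lemma exists_signedSum_eq_half_sub_add (χ χ' : ι → ℤˣ) (ψ : {j // χ j = χ' j} → ℤˣ) :
    ∃ φ : ι → ℤˣ, ∀ a : ι → ℝ, signedSum a φ =
      (signedSum a χ - signedSum a χ') / 2 + signedSum (fun j : {j // χ j = χ' j} => a j) ψ := by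
  refine ⟨fun j => if h : χ j = χ' j then ψ ⟨j, h⟩ else χ j, fun a => ?_⟩
  have hagree : ∑ j : {j // χ j = χ' j}, (χ j • a j - χ' j • a j) = 0 :=
    sum_eq_zero fun j _ => by rw [j.2, sub_self]
  have hdiffer (j : {j // χ j ≠ χ' j}) : χ' j • a j = -(χ j • a j) := by
    rw [Int.units_ne_iff_eq_neg.1 j.2, Units.neg_smul, neg_neg]
  unfold signedSum
  rw [← sum_sub_distrib, ← Fintype.sum_subtype_add_sum_subtype (fun j => χ j = χ' j),
    ← Fintype.sum_subtype_add_sum_subtype (fun j => χ j = χ' j) fun j => χ j • a j - χ' j • a j,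
    hagree, zero_add, add_comm, sum_div]
  congr 1
  · refine sum_congr rfl fun j _ => ?_
    simp only [dif_neg j.2, hdiffer]
    ring
  · exact sum_congr rfl fun j _ => by simp only [dif_pos j.2]

lemma card_subtype_eq_add_hammingDist {α : Type*} [DecidableEq α] (u v : ι → α) :
    Fintype.card {j // u j = v j} + hammingDist u v = Fintype.card ι := by
  rw [Fintype.card_subtype]
  exact card_filter_add_card_filter_not _

/-- Spencer's six standard deviations theorem. -/
theorem exists_forall_abs_signedSum_le {A : Matrix κ ι ℝ} (hA : ∀ i j, |A i j| ≤ 1) :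
    ∃ χ : ι → ℤˣ, ∀ i, |signedSum (A i) χ| ≤
      128 * spencerBound (Fintype.card κ) (Fintype.card ι) := by
  induction ht : Fintype.card ι using Nat.strong_induction_on generalizing ι with
  | _ t ih =>
  subst ht
  rcases isEmpty_or_nonempty ι with hι | hι
  · exact ⟨1, fun i => by simp [signedSum, spencerBound]⟩
  have hrow (i : κ) : ∑ j, A i j ^ 2 ≤ Fintype.card ι := by
    simpa using sum_le_card_nsmul univ _ 1 fun j _ => (sq_le_one_iff_abs_le_one _).2 (hA i j)
  obtain ⟨χ, χ', hdist, hχ⟩ := exists_hammingDist_gt_abs_signedSum_sub_le hrow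
  have hcard : (Fintype.card {j // χ j = χ' j} : ℝ) + hammingDist χ χ' = Fintype.card ι :=
    mod_cast card_subtype_eq_add_hammingDist χ χ'
  have hlt : Fintype.card {j // χ j = χ' j} < Fintype.card ι := by
    rify
    linarith [(Fintype.card ι).cast_nonneg (α := ℝ)]
  obtain ⟨ψ, hψ⟩ := ih _ hlt (ι := {j // χ j = χ' j}) (A := fun i j => A i j)
    (fun i j => hA i j) rfl
  obtain ⟨φ, hφ⟩ := exists_signedSum_eq_half_sub_add χ χ' ψ
  refine ⟨φ, fun i => ?_⟩
  have hdecay := spencerBound_le_mul_of_le (n := Fintype.card κ) (Nat.cast_nonneg _)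
    (Nat.cast_nonneg _) (by linarith :
      (Fintype.card {j // χ j = χ' j} : ℝ) ≤ 7 / 8 * Fintype.card ι)
  calc |signedSum (A i) φ|
      ≤ |signedSum (A i) χ - signedSum (A i) χ'| / 2 +
          |signedSum (fun j : {j // χ j = χ' j} => A i j) ψ| := by
        rw [hφ, ← abs_two, ← abs_div, abs_two]
        exact abs_add_le _ _
    _ ≤ 8 * spencerBound (Fintype.card κ) (Fintype.card ι) / 2 +
          128 * (31 / 32 * spencerBound (Fintype.card κ) (Fintype.card ι)) := by
        gcongr
        · exact hχ i
        · exact (hψ i).trans (by gcongr)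
    _ = 128 * spencerBound (Fintype.card κ) (Fintype.card ι) := by ring

end Colouring

section ColourClasses

variable {ι : Type*} [Fintype ι]

lemma sum_filter_sub_half_sum (χ : ι → ℤˣ) (ε : ℤˣ) (a : ι → ℝ) :
    ∑ j with χ j = ε, a j - 1 / 2 * ∑ j, a j = ε • signedSum a χ / 2 := by
  rw [signedSum, smul_sum, sum_filter, mul_sum, sum_div, ← sum_sub_distrib]
  refine sum_congr rfl fun j _ => ?_
  split_ifs with h
  · rw [h, smul_smul, Int.units_mul_self, one_smul]
    ring
  · rw [Int.units_ne_iff_eq_neg.1 h, Units.neg_smul, smul_neg, smul_smul, Int.units_mul_self,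
      one_smul]
    ring

lemma exists_card_filter_le_half (χ : ι → ℤˣ) :
    ∃ ε, (#{j | χ j = ε} : ℝ) ≤ (Fintype.card ι : ℝ) / 2 := by
  by_contra! hlarge
  have hcard : (∑ ε, #{j | χ j = ε} : ℝ) = Fintype.card ι := by
    exact_mod_cast (card_eq_sum_card_fiberwise fun j _ => mem_univ (χ j)).symm
  have hsum : ∑ _ε : ℤˣ, (Fintype.card ι : ℝ) / 2 < ∑ ε, (#{j | χ j = ε} : ℝ) :=
    sum_lt_sum_of_nonempty univ_nonempty fun ε _ => hlarge ε
  simp only [sum_const, card_univ, Fintype.card_units_int, nsmul_eq_mul] at hsum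
  linarith

lemma exists_card_le_half_abs_sum_sub_eq (χ : ι → ℤˣ) :
    ∃ S : Finset ι, (#S : ℝ) ≤ (Fintype.card ι : ℝ) / 2 ∧
      ∀ a : ι → ℝ, |∑ j ∈ S, a j - 1 / 2 * ∑ j, a j| = |signedSum a χ| / 2 := by
  obtain ⟨ε, hε⟩ := exists_card_filter_le_half χ
  refine ⟨univ.filter fun j => χ j = ε, hε, fun a => ?_⟩
  rw [sum_filter_sub_half_sum, abs_div, abs_two]
  rcases Int.units_eq_one_or ε with rfl | rfl <;> simp

end ColourClasses

/-- Row-sum preserving column subset selection: for any `A ∈ [-1,1]^{n×T}` there is a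
subset `S` of at most `T/2` columns whose row sums approximate half the full row sums
up to `C √(T log(2 + n/T))`. -/
theorem row_sum_preserving_columns :
    ∃ C : ℝ, 0 < C ∧
      ∀ (n T : ℕ), 0 < n → 0 < T →
        ∀ A : Matrix (Fin n) (Fin T) ℝ, (∀ i j, A i j ∈ Set.Icc (-1 : ℝ) 1) →
          ∃ S : Finset (Fin T), (S.card : ℝ) ≤ (T : ℝ) / 2 ∧
            ∀ i, |(∑ j ∈ S, A i j) - (1 / 2) * ∑ j, A i j| ≤
              C * Real.sqrt ((T : ℝ) * Real.log (2 + (n : ℝ) / (T : ℝ))) := by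
  refine ⟨128, by norm_num, fun n T _ _ A hA => ?_⟩
  obtain ⟨χ, hχ⟩ := exists_forall_abs_signedSum_le fun i j => abs_le.2 (hA i j)
  obtain ⟨S, hcard, hS⟩ := exists_card_le_half_abs_sum_sub_eq χ
  rw [Fintype.card_fin] at hcard
  refine ⟨S, hcard, fun i => ?_⟩
  calc |∑ j ∈ S, A i j - 1 / 2 * ∑ j, A i j| = |signedSum (A i) χ| / 2 := hS (A i)
    _ ≤ 128 * spencerBound n T / 2 := by
        gcongr
        simpa using hχ i
    _ ≤ 128 * √(T * log (2 + n / T)) := by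
        linarith [spencerBound_le_two_mul_sqrt n.cast_nonneg T.cast_nonneg]
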